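/- arXiv:2409.18030 — 2 statements merged into one kernel-verified Lean document; each statement's English description precedes it below -/
import Mathlib

section
/- Let F be a finite field of cardinality q and let f be a polynomial over F of degree n > 0. Then f is irreducible if and only if (1) f divides X^(q^n) − X, and (2) for every prime t dividing n, f is coprime to X^(q^(n/t)) − X (i.e., there exist polynomials u, v over F with u·f + v·(X^(q^(n/t)) − X) = 1). -/
open Polynomial

/-!
Over a field with `q` elements, an irreducible polynomial divides `X ^ q ^ m - X` exactly when its
degree divides `m`. The only divisor of `n` dividing none of the quotients `n / t`, for `t` a prime
factor of `n`, is `n` itself. So, for `n = deg f`, the two conditions say that every irreducible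
factor of `f` has degree `n`, that is, that `f` is its own only irreducible factor up to units.
-/

theorem exists_prime_dvd_and_dvd_div {d n : ℕ} (hdn : d ∣ n) (hne : d ≠ n) :
    ∃ t, t.Prime ∧ t ∣ n ∧ d ∣ n / t := by
  obtain ⟨k, rfl⟩ := hdn
  have hk : k ≠ 1 := by rintro rfl; exact hne (mul_one d).symm
  obtain ⟨t, ht, htk⟩ := Nat.exists_prime_and_dvd hk
  refine ⟨t, ht, htk.mul_left d, ?_⟩
  rw [Nat.mul_div_assoc d htk]
  exact dvd_mul_right d (k / t)

theorem eq_iff_dvd_and_forall_prime_not_dvd_div {d n : ℕ} (hn : n ≠ 0) :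
    d = n ↔ d ∣ n ∧ ∀ t : ℕ, t.Prime → t ∣ n → ¬d ∣ n / t := by
  constructor
  · rintro rfl
    refine ⟨dvd_rfl, fun t ht htd ↦ ?_⟩
    have hd : 0 < d := Nat.pos_of_ne_zero hn
    have hpos : 0 < d / t := Nat.div_pos (Nat.le_of_dvd hd htd) ht.pos
    exact Nat.not_dvd_of_pos_of_lt hpos (Nat.div_lt_self hd ht.one_lt)
  · rintro ⟨hdn, hmax⟩
    by_contra hne
    obtain ⟨t, ht, htn, hdt⟩ := exists_prime_dvd_and_dvd_div hdn hne
    exact hmax t ht htn hdt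

theorem natDegree_eq_iff_dvd_X_pow_sub_X {F : Type*} [Field F] [Finite F] {g : F[X]}
    (hg : Irreducible g) {n : ℕ} (hn : n ≠ 0) :
    g.natDegree = n ↔ g ∣ X ^ Nat.card F ^ n - X ∧
      ∀ t : ℕ, t.Prime → t ∣ n → ¬g ∣ X ^ Nat.card F ^ (n / t) - X := by
  simp only [eq_iff_dvd_and_forall_prime_not_dvd_div hn,
    hg.natDegree_dvd_iff_dvd_X_pow_card_pow_sub_X]

/-- **Rabin's irreducibility test.** A polynomial `f` of positive degree over a finite
field `F` with `q` elements is irreducible iff `f ∣ X^(q^n) - X` and for every prime `t`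
dividing `n = deg f`, `f` is coprime to `X^(q^(n/t)) - X`. -/
theorem irreducible_iff_dvd_X_pow_sub_X {F : Type*} [Field F] [Fintype F]
    (f : F[X]) (hd : 0 < f.natDegree) :
    Irreducible f ↔
      f ∣ (X ^ (Fintype.card F) ^ f.natDegree - X) ∧
        ∀ t : ℕ, Nat.Prime t → t ∣ f.natDegree →
          IsCoprime f (X ^ (Fintype.card F) ^ (f.natDegree / t) - X) := by
  rw [← Nat.card_eq_fintype_card]
  constructor
  · intro hf
    simpa only [hf.coprime_iff_not_dvd] using
      (natDegree_eq_iff_dvd_X_pow_sub_X hf hd.ne').mp rfl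
  · rintro ⟨hdvd, hcop⟩
    obtain ⟨g, hg, hgf⟩ := exists_irreducible_of_natDegree_pos hd
    have hdeg : g.natDegree = f.natDegree :=
      (natDegree_eq_iff_dvd_X_pow_sub_X hg hd.ne').mpr ⟨hgf.trans hdvd, fun t ht htf hgt ↦
        hg.not_isUnit ((hcop t ht htf).isUnit_of_dvd' hgf hgt)⟩
    have hassoc : Associated g f :=
      associated_of_dvd_of_natDegree_le hgf (ne_zero_of_natDegree_gt hd) hdeg.ge
    exact hassoc.irreducible hg
end

section
/- Let f = X^3 − 30X − 80 ∈ ℚ[X] (which is irreducible over ℚ) and let K = ℚ[X]/⟨f⟩, a number field of degree 3. Then the discriminant of the number field K equals −16200. -/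
open Polynomial

/-!
Put `ω = α` and `θ = α² / 2 - 15` for a root `α` of the cubic. Both are algebraic integers, and they
multiply by the Delone–Faddeev table of the binary cubic form `-2X³ + 15XY² + 20Y³`, so
`1, ω, θ` has the discriminant of that form, `-16200 = -2³ · 3⁴ · 5²`. It remains to see that the
index of `ℤ + ℤω + ℤθ` in the ring of integers is prime to `2`, `3` and `5`. Modulo each of these
primes the form has a multiple root, at `(1 : 0)`, `(1 : 1)` and `(0 : 1)` respectively, where it
takes the values `-2`, `33` and `20`. None of them is divisible by the square of the prime, and
this is what makes a cubic ring maximal at `p`.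
-/

open Module NumberField

section Saturation

variable {ι A : Type*} [Fintype ι] [CommRing A]

/-- The family `w` is saturated at `p` if every integral combination of `w` that is divisible by `p`
in `A` has all its coefficients divisible by `p`. For a `ℤ`-independent family of full rank this
says that `p` does not divide the index of its span in `A`. -/
def IsSaturatedAt (p : ℤ) (w : ι → A) : Prop :=
  ∀ v : ι → ℤ, (p : A) ∣ ∑ i, v i * w i → ∀ i, p ∣ v i

theorem isSaturatedAt_triple_iff {p : ℤ} {x y z : A} :
    IsSaturatedAt p ![x, y, z] ↔
      ∀ r s t : ℤ, (p : A) ∣ r * x + s * y + t * z → p ∣ r ∧ p ∣ s ∧ p ∣ t := by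
  constructor
  · intro h r s t hdvd
    simpa [Fin.forall_fin_succ] using h ![r, s, t] (by simpa [Fin.sum_univ_three] using hdvd)
  · intro h v hdvd
    simpa [Fin.forall_fin_succ] using
      h (v 0) (v 1) (v 2) (by simpa [Fin.sum_univ_three] using hdvd)

namespace IsSaturatedAt

variable {p : ℤ} {x y : A}

theorem of_swap (h : IsSaturatedAt p ![1, y, x]) : IsSaturatedAt p ![1, x, y] := by
  rw [isSaturatedAt_triple_iff] at h ⊢
  intro u v w hdvd
  obtain ⟨hu, hw, hv⟩ := h u w v (by rwa [add_right_comm])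
  exact ⟨hu, hv, hw⟩

theorem of_shear {k l n : ℤ} (h : IsSaturatedAt p ![1, (k : A) + x + n * y, y - (l : A)]) :
    IsSaturatedAt p ![1, x, y] := by
  rw [isSaturatedAt_triple_iff] at h ⊢
  intro u v w hdvd
  obtain ⟨hu, hv, hw⟩ := h (u - v * k + (w - v * n) * l) v (w - v * n)
    (by convert! hdvd using 1; push_cast; ring)
  have hw' : p ∣ w := (dvd_sub_left (hv.mul_right n)).1 hw
  have hu' : p ∣ u - v * k := (dvd_add_left (hw.mul_right l)).1 hu
  exact ⟨(dvd_sub_left (hv.mul_right k)).1 hu', hv, hw'⟩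

end IsSaturatedAt

variable [DecidableEq ι]

theorem not_dvd_det_toMatrix_of_isSaturatedAt (b : Basis ι ℤ A) {w : ι → A} {p : ℕ}
    [Fact p.Prime] (hw : IsSaturatedAt p w) : ¬ (p : ℤ) ∣ (b.toMatrix w).det := by
  intro hdet
  have hdet_mod : ((Int.castRingHom (ZMod p)).mapMatrix (b.toMatrix w)).det = 0 := by
    rw [← RingHom.map_det]
    exact (ZMod.intCast_zmod_eq_zero_iff_dvd _ p).2 hdet
  obtain ⟨v, hv_ne, hv⟩ := Matrix.exists_mulVec_eq_zero_iff.2 hdet_mod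
  choose u hu using fun i ↦ ZMod.intCast_surjective (v i)
  have hcoord (j : ι) : (p : ℤ) ∣ (b.toMatrix w).mulVec u j := by
    rw [← ZMod.intCast_zmod_eq_zero_iff_dvd]
    simpa [Matrix.mulVec, dotProduct, hu] using congrFun hv j
  have hsum : ∑ i, (u i : A) * w i = ∑ j, ((b.toMatrix w).mulVec u j : A) * b j := by
    simp only [Matrix.mulVec, dotProduct, Int.cast_sum, Int.cast_mul, Finset.sum_mul]
    rw [Finset.sum_comm]
    refine Finset.sum_congr rfl fun i _ ↦ ?_
    conv_lhs => rw [← b.sum_toMatrix_smul_self w i, Finset.mul_sum]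
    exact Finset.sum_congr rfl fun j _ ↦ by rw [zsmul_eq_mul]; ring
  have hu_dvd : ∀ i, (p : ℤ) ∣ u i := hw u <| by
    rw [hsum]
    exact Finset.dvd_sum fun j _ ↦ ((Int.cast_dvd_cast _ _ (hcoord j)).mul_right _)
  exact hv_ne <| funext fun i ↦ by
    rw [← hu i, Pi.zero_apply, ZMod.intCast_zmod_eq_zero_iff_dvd]
    exact hu_dvd i

theorem discr_eq_discr_basis_of_isSaturatedAt (b : Basis ι ℤ A) {w : ι → A}
    (hw : ∀ p : ℕ, p.Prime → (p : ℤ) ^ 2 ∣ Algebra.discr ℤ w → IsSaturatedAt p w) :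
    Algebra.discr ℤ w = Algebra.discr ℤ b := by
  have hdiscr : Algebra.discr ℤ w = (b.toMatrix w).det ^ 2 * Algebra.discr ℤ b := by
    rw [← Algebra.discr_of_matrix_vecMul, b.toMatrix_map_vecMul]
  have hunit : IsUnit (b.toMatrix w).det := by
    by_contra hdet
    obtain ⟨p, hp, hdvd⟩ := Nat.exists_prime_and_dvd (mt Int.isUnit_iff_natAbs_eq.2 hdet)
    rw [← Int.natCast_dvd] at hdvd
    have : Fact p.Prime := ⟨hp⟩
    have hsq : (p : ℤ) ^ 2 ∣ Algebra.discr ℤ w := hdiscr ▸ (pow_dvd_pow_of_dvd hdvd 2).mul_right _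
    exact not_dvd_det_toMatrix_of_isSaturatedAt b (hw p hp hsq) hdvd
  rw [hdiscr, Int.isUnit_sq hunit, one_mul]

end Saturation

section IntCastDvd

variable {A : Type*} [CommRing A] {p n : ℤ} {z : A}

theorem dvd_of_dvd_intCast_mul (hp : Prime p) (hn : ¬ p ∣ n) (h : (p : A) ∣ n * z) :
    (p : A) ∣ z :=
  ((hp.coprime_iff_not_dvd.2 hn).intCast).dvd_of_dvd_mul_left h

theorem dvd_trace_of_intCast_dvd (h : (p : A) ∣ z) : p ∣ Algebra.trace ℤ A z := by
  obtain ⟨y, rfl⟩ := h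
  rw [← zsmul_eq_mul, map_zsmul, smul_eq_mul]
  exact dvd_mul_right _ _

theorem dvd_of_intCast_dvd_intCast [Nontrivial A] [Module.Free ℤ A] [Module.Finite ℤ A]
    (h : (p : A) ∣ n) : p ∣ n := by
  have hnorm (m : ℤ) : Algebra.norm ℤ (m : A) = m ^ finrank ℤ A := by
    simpa [finrank_eq_card_chooseBasisIndex] using
      Algebra.norm_algebraMap_of_basis (Free.chooseBasis ℤ A) m
  have := map_dvd (Algebra.norm ℤ) h
  rw [hnorm, hnorm] at this
  exact (Int.pow_dvd_pow_iff finrank_pos.ne').1 this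

theorem dvd_of_sq_dvd_two_mul (hp : Prime p) (h : p ^ 2 ∣ 2 * n) : p ∣ n := by
  by_contra hn
  have : p ^ 2 ∣ 2 := hp.pow_dvd_of_dvd_mul_right 2 hn h
  exact hp.not_isUnit (Int.prime_two.squarefree p (by rwa [← sq]))

end IntCastDvd

/-- The elements `ω`, `θ` of the cubic ring `A` multiply by the Delone–Faddeev table of the binary
cubic form `aX³ + bX²Y + cXY² + dY³`, whose coefficients are those of `F`. The family `1, ω, θ` is
not required to span `A`; the two traces are the ones that the table forces whenever it spans a
subgroup of finite index. -/
structure IsDeloneFaddeev {A : Type*} [CommRing A] (F : Cubic ℤ) (ω θ : A) : Prop where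
  finrank_eq : finrank ℤ A = 3
  left_mul_left : ω * ω = -(F.a * F.c) + F.b * ω - F.a * θ
  left_mul_right : ω * θ = -(F.a * F.d)
  right_mul_right : θ * θ = -(F.b * F.d) + F.d * ω - F.c * θ
  trace_left : Algebra.trace ℤ A ω = F.b
  trace_right : Algebra.trace ℤ A θ = -F.c

namespace IsDeloneFaddeev

variable {A : Type*} [CommRing A] {F : Cubic ℤ} {ω θ : A}

theorem swap (h : IsDeloneFaddeev F ω θ) : IsDeloneFaddeev ⟨-F.d, -F.c, -F.b, -F.a⟩ θ ω where
  finrank_eq := h.finrank_eq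
  left_mul_left := by push_cast; linear_combination h.right_mul_right
  left_mul_right := by push_cast; linear_combination h.left_mul_right
  right_mul_right := by push_cast; linear_combination h.left_mul_left
  trace_left := h.trace_right
  trace_right := by rw [h.trace_left, neg_neg]

variable [Module.Free ℤ A]

theorem trace_intCast (h : IsDeloneFaddeev F ω θ) (n : ℤ) : Algebra.trace ℤ A n = 3 * n := by
  simpa [h.finrank_eq] using Algebra.trace_algebraMap (S := A) n

theorem trace_of_eq (h : IsDeloneFaddeev F ω θ) {z : A} (u v w : ℤ)
    (hz : z = u + v * ω + w * θ) : Algebra.trace ℤ A z = 3 * u + v * F.b - w * F.c := by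
  rw [hz, ← zsmul_eq_mul ω, ← zsmul_eq_mul θ, map_add, map_add, map_zsmul, map_zsmul,
    h.trace_intCast, h.trace_left, h.trace_right]
  simp only [smul_eq_mul]
  ring

theorem trace_left_mul_left (h : IsDeloneFaddeev F ω θ) :
    Algebra.trace ℤ A (ω * ω) = F.b ^ 2 - 2 * F.a * F.c := by
  rw [h.trace_of_eq (-(F.a * F.c)) F.b (-F.a) (by push_cast; linear_combination h.left_mul_left)]
  ring

theorem trace_left_mul_right (h : IsDeloneFaddeev F ω θ) :
    Algebra.trace ℤ A (ω * θ) = -3 * F.a * F.d := by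
  rw [h.trace_of_eq (-(F.a * F.d)) 0 0 (by push_cast; linear_combination h.left_mul_right)]
  ring

theorem trace_right_mul_right (h : IsDeloneFaddeev F ω θ) :
    Algebra.trace ℤ A (θ * θ) = F.c ^ 2 - 2 * F.b * F.d := by
  rw [h.trace_of_eq (-(F.b * F.d)) F.d (-F.c) (by push_cast; linear_combination h.right_mul_right)]
  ring

theorem discr_eq (h : IsDeloneFaddeev F ω θ) : Algebra.discr ℤ ![1, ω, θ] = F.discr := by
  have trace_one : Algebra.trace ℤ A 1 = 3 := by simpa using h.trace_intCast 1
  rw [Algebra.discr_def, Matrix.det_fin_three]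
  simp only [Algebra.traceMatrix_apply, Algebra.traceForm_apply, Matrix.cons_val, one_mul, mul_one,
    mul_comm θ ω, trace_one, h.trace_left, h.trace_right, h.trace_left_mul_left,
    h.trace_left_mul_right, h.trace_right_mul_right, Cubic.discr]
  ring

-- The form of the new triple is `F(X, nX + Y)`.
theorem shear (h : IsDeloneFaddeev F ω θ) (n : ℤ) :
    IsDeloneFaddeev ⟨F.a + F.b * n + F.c * n ^ 2 + F.d * n ^ 3, F.b + 2 * F.c * n + 3 * F.d * n ^ 2,
      F.c + 3 * F.d * n, F.d⟩ ((F.c * n + F.d * n ^ 2 : ℤ) + ω + n * θ) (θ - (F.d * n : ℤ)) where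
  finrank_eq := h.finrank_eq
  left_mul_left := by
    push_cast
    linear_combination h.left_mul_left + 2 * n * h.left_mul_right + n ^ 2 * h.right_mul_right
  left_mul_right := by
    push_cast
    linear_combination h.left_mul_right + n * h.right_mul_right
  right_mul_right := by push_cast; linear_combination h.right_mul_right
  trace_left := by
    rw [h.trace_of_eq (F.c * n + F.d * n ^ 2) 1 n (by push_cast; ring)]
    ring
  trace_right := by
    rw [map_sub, h.trace_right, h.trace_intCast]
    ring

section Maximality

variable {p : ℤ}

theorem dvd_right_add_c_of_dvd_left (h : IsDeloneFaddeev F ω θ) (hp : Prime p) (ha : p ∣ F.a)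
    (ha_sq : ¬ p ^ 2 ∣ F.a) (hb : p ∣ F.b) (hω : (p : A) ∣ ω) : (p : A) ∣ θ + F.c := by
  obtain ⟨a', ha'⟩ := ha
  obtain ⟨b', hb'⟩ := hb
  obtain ⟨η, rfl⟩ := hω
  have ha'_ndvd : ¬ p ∣ a' := fun hdvd ↦ ha_sq <| by
    rw [ha', sq]
    exact mul_dvd_mul_left p hdvd
  have htable : p • (a' * (θ + F.c)) = p • (p * (b' * η - η ^ 2)) := by
    simp only [zsmul_eq_mul]
    have := h.left_mul_left
    rw [ha', hb'] at this
    push_cast at this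
    linear_combination this
  exact dvd_of_dvd_intCast_mul hp ha'_ndvd ⟨_, smul_right_injective A hp.ne_zero htable⟩

theorem dvd_c_of_dvd_right_add_c (h : IsDeloneFaddeev F ω θ) (hp : Prime p) (hb : p ∣ F.b)
    (hθ : (p : A) ∣ θ + F.c) : p ∣ F.c := by
  obtain ⟨τ, hτ⟩ := hθ
  -- The trace of `θ + c` itself is `2c`, which says nothing about `c` when `p = 2`.
  have htrace : Algebra.trace ℤ A ((θ + F.c) ^ 2) = 2 * (F.c ^ 2 - F.b * F.d) := by
    rw [h.trace_of_eq (F.c ^ 2 - F.b * F.d) F.d F.c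
      (by push_cast; linear_combination h.right_mul_right)]
    ring
  have hdvd : p ^ 2 ∣ 2 * (F.c ^ 2 - F.b * F.d) := by
    rw [← htrace]
    exact dvd_trace_of_intCast_dvd ⟨τ ^ 2, by push_cast; rw [hτ]; ring⟩
  have hsq : p ∣ F.c ^ 2 :=
    (dvd_sub_left (hb.mul_right F.d)).1 (dvd_of_sq_dvd_two_mul hp hdvd)
  exact hp.dvd_of_dvd_pow hsq

theorem not_dvd_left (h : IsDeloneFaddeev F ω θ) (hp : Prime p) (ha : p ∣ F.a)
    (ha_sq : ¬ p ^ 2 ∣ F.a) (hb : p ∣ F.b) (hcd : ¬ (p ∣ F.c ∧ p ∣ F.d)) : ¬ (p : A) ∣ ω := by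
  intro hω
  have : Module.Finite ℤ A := Module.finite_of_finrank_pos (by simp [h.finrank_eq])
  have : Nontrivial A := Module.nontrivial_of_finrank_pos (R := ℤ) (by simp [h.finrank_eq])
  have hθ_add : (p : A) ∣ θ + F.c := h.dvd_right_add_c_of_dvd_left hp ha ha_sq hb hω
  have hc : p ∣ F.c := h.dvd_c_of_dvd_right_add_c hp hb hθ_add
  have hθ : (p : A) ∣ θ := (dvd_add_left (Int.cast_dvd_cast _ _ hc)).1 hθ_add
  have had : p ^ 2 ∣ F.a * F.d := dvd_of_intCast_dvd_intCast (A := A) <| by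
    rw [← dvd_neg]
    push_cast
    rw [← h.left_mul_right, sq]
    exact mul_dvd_mul hω hθ
  exact ha_sq (hp.pow_dvd_of_dvd_mul_right 2 (fun hd ↦ hcd ⟨hc, hd⟩) had)

theorem dvd_c_of_dvd_sub (h : IsDeloneFaddeev F ω θ) (hp : Prime p) (hb : p ∣ F.b)
    (hdvd : (p : A) ∣ F.d * ω - F.c * θ) : p ∣ F.c := by
  have htrace : p ∣ F.d * F.b + F.c ^ 2 := by
    convert! dvd_trace_of_intCast_dvd hdvd using 1
    rw [h.trace_of_eq 0 F.d (-F.c) (by push_cast; ring)]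
    ring
  exact hp.dvd_of_dvd_pow ((dvd_add_right (hb.mul_left F.d)).1 htrace)

-- Modulo `p` the form is nonzero and has a multiple root at `(1 : 0)`, where its value is `F.a`.
theorem isSaturatedAt (h : IsDeloneFaddeev F ω θ) (hp : Prime p) (ha : p ∣ F.a)
    (ha_sq : ¬ p ^ 2 ∣ F.a) (hb : p ∣ F.b) (hcd : ¬ (p ∣ F.c ∧ p ∣ F.d)) :
    IsSaturatedAt p ![1, ω, θ] := by
  rw [isSaturatedAt_triple_iff]
  intro u v w hz
  rw [mul_one] at hz
  have hω : ¬ (p : A) ∣ ω := h.not_dvd_left hp ha ha_sq hb hcd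
  obtain ⟨a', ha'⟩ : (p : A) ∣ F.a := Int.cast_dvd_cast _ _ ha
  obtain ⟨b', hb'⟩ : (p : A) ∣ F.b := Int.cast_dvd_cast _ _ hb
  obtain ⟨y, hy⟩ := hz
  have hu : p ∣ u := by
    by_contra hu
    refine hω (dvd_of_dvd_intCast_mul hp hu
      ⟨ω * y + v * (a' * F.c - b' * ω + a' * θ) + w * a' * F.d, ?_⟩)
    linear_combination ω * hy - v * h.left_mul_left - w * h.left_mul_right +
      (v * (F.c + θ) + w * F.d) * ha' - v * ω * hb'
  obtain ⟨u', hu'⟩ : (p : A) ∣ u := Int.cast_dvd_cast _ _ hu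
  have hw : p ∣ w := by
    by_contra hw
    have hrel : (p : A) ∣ F.d * ω - F.c * θ := by
      refine dvd_of_dvd_intCast_mul hp hw
        ⟨θ * y - u' * θ + v * a' * F.d + w * b' * F.d, ?_⟩
      linear_combination θ * hy - v * h.left_mul_right - w * h.right_mul_right - θ * hu' +
        v * F.d * ha' + w * F.d * hb'
    have hc : p ∣ F.c := h.dvd_c_of_dvd_sub hp hb hrel
    have hdω : (p : A) ∣ F.d * ω :=
      (dvd_sub_left ((Int.cast_dvd_cast _ _ hc).mul_right θ)).1 hrel
    exact hω (dvd_of_dvd_intCast_mul hp (fun hd ↦ hcd ⟨hc, hd⟩) hdω)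
  obtain ⟨w', hw'⟩ : (p : A) ∣ w := Int.cast_dvd_cast _ _ hw
  have hv : p ∣ v := by
    by_contra hv
    refine hω (dvd_of_dvd_intCast_mul hp hv ⟨y - u' - w' * θ, ?_⟩)
    linear_combination hy - hu' - θ * hw'
  exact ⟨hu, hv, hw⟩

end Maximality

theorem numberField_discr_eq {K : Type*} [Field K] [NumberField K] {ω θ : 𝓞 K}
    (h : IsDeloneFaddeev F ω θ)
    (hsat : ∀ p : ℕ, p.Prime → (p : ℤ) ^ 2 ∣ F.discr → IsSaturatedAt p ![1, ω, θ]) :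
    NumberField.discr K = F.discr := by
  rw [← h.discr_eq] at hsat ⊢
  rw [discr_eq_discr_basis_of_isSaturatedAt (finBasisOfFinrankEq ℤ (𝓞 K) h.finrank_eq) hsat,
    NumberField.discr_eq_discr]

end IsDeloneFaddeev

section CubicPowerBasis

variable {R A : Type*} [CommRing R] [CommRing A] [Algebra R A] {pb : PowerBasis R A} {r s t : R}

theorem leftMulMatrix_gen_of_cubic (hdim : pb.dim = 3)
    (hgen : pb.gen ^ 3 = t • 1 + s • pb.gen + r • pb.gen ^ 2) :
    Algebra.leftMulMatrix (pb.basis.reindex (finCongr hdim)) pb.gen =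
      !![0, 0, t; 1, 0, s; 0, 1, r] := by
  set B := pb.basis.reindex (finCongr hdim) with hB
  have hB_apply (i : Fin 3) : B i = pb.gen ^ (i : ℕ) := by simp [hB]
  have hmul (j : Fin 3) :
      pb.gen * B j = ∑ i, (!![0, 0, t; 1, 0, s; 0, 1, r] : Matrix _ _ R) i j • B i := by
    rw [hB_apply, ← pow_succ', Fin.sum_univ_three]
    fin_cases j
    · simp [hB_apply]
    · simp [hB_apply]
    · simp [hB_apply, hgen]
  ext i j
  rw [Algebra.leftMulMatrix_eq_repr_mul, hmul, B.repr_sum_self]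

theorem trace_gen_of_cubic (hdim : pb.dim = 3)
    (hgen : pb.gen ^ 3 = t • 1 + s • pb.gen + r • pb.gen ^ 2) :
    Algebra.trace R A pb.gen = r := by
  rw [Algebra.trace_eq_matrix_trace (pb.basis.reindex (finCongr hdim)),
    leftMulMatrix_gen_of_cubic hdim hgen, Matrix.trace_fin_three]
  simp

theorem trace_gen_sq_of_cubic (hdim : pb.dim = 3)
    (hgen : pb.gen ^ 3 = t • 1 + s • pb.gen + r • pb.gen ^ 2) :
    Algebra.trace R A (pb.gen ^ 2) = r ^ 2 + 2 * s := by
  rw [Algebra.trace_eq_matrix_trace (pb.basis.reindex (finCongr hdim)), map_pow,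
    leftMulMatrix_gen_of_cubic hdim hgen, sq, Matrix.trace_fin_three]
  simp only [Matrix.mul_apply, Fin.sum_univ_three, Matrix.of_apply, Matrix.cons_val',
    Matrix.cons_val, Matrix.cons_val_fin_one, Matrix.cons_val_zero, Matrix.cons_val_one]
  ring

end CubicPowerBasis

theorem isDeloneFaddeev_of_cube_eq {A : Type*} [CommRing A] [Module.Free ℤ A] {ω θ : A}
    {k m n : ℤ} (hrank : finrank ℤ A = 3) (hk : k ≠ 0) (hω : ω ^ 3 = k * m * ω + k ^ 2 * n)
    (hθ : k * θ = ω ^ 2 - k * m) (htrace : Algebra.trace ℤ A ω = 0)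
    (htrace_sq : Algebra.trace ℤ A (ω ^ 2) = 2 * (k * m)) :
    IsDeloneFaddeev ⟨-k, 0, m, n⟩ ω θ := by
  have cancel {x y : A} (h : (k : A) * x = k * y) : x = y :=
    smul_right_injective A hk (by simpa using h)
  have hωθ : ω * θ = k * n := cancel (by linear_combination ω * hθ + hω)
  have hθθ : θ * θ = n * ω - m * θ := cancel (by linear_combination θ * hθ + ω * hωθ)
  have htrace_θ : k * Algebra.trace ℤ A θ = k * -m := by
    have htrace_km : Algebra.trace ℤ A (k * m) = 3 * (k * m) := by
      simpa [hrank] using Algebra.trace_algebraMap (S := A) (k * m)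
    rw [← smul_eq_mul, ← map_zsmul, zsmul_eq_mul, hθ, map_sub, htrace_sq, htrace_km]
    ring
  exact
    { finrank_eq := hrank
      left_mul_left := by push_cast; linear_combination -hθ
      left_mul_right := by push_cast; linear_combination hωθ
      right_mul_right := by push_cast; linear_combination hθθ
      trace_left := htrace
      trace_right := mul_left_cancel₀ hk htrace_θ }

theorem isIntegral_of_cube_eq {A : Type*} [CommRing A] {x : A} {r s t : ℤ}
    (hx : x ^ 3 = r * x ^ 2 + s * x + t) : IsIntegral ℤ x := by
  refine ⟨X ^ 3 - C r * X ^ 2 - C s * X - C t, by monicity!, ?_⟩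
  simp only [eval₂_sub, eval₂_mul, eval₂_pow, eval₂_X, eval₂_C, algebraMap_int_eq,
    Int.coe_castRingHom]
  linear_combination hx

theorem exists_isDeloneFaddeev_of_powerBasis {K : Type*} [Field K] [NumberField K]
    {pb : PowerBasis ℚ K} (hdim : pb.dim = 3) {k m n : ℤ} (hk : k ≠ 0)
    (hgen : pb.gen ^ 3 = k * m * pb.gen + k ^ 2 * n) :
    ∃ ω θ : 𝓞 K, IsDeloneFaddeev ⟨-k, 0, m, n⟩ ω θ := by
  have hkK : (k : K) ≠ 0 := Int.cast_ne_zero.2 hk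
  obtain ⟨β, hβ⟩ : ∃ β : K, k * β = pb.gen ^ 2 - k * m := ⟨_, mul_div_cancel₀ _ hkK⟩
  have hgen_int : IsIntegral ℤ pb.gen :=
    isIntegral_of_cube_eq (r := 0) (s := k * m) (t := k ^ 2 * n) (by push_cast; rw [hgen]; ring)
  have hβ_int : IsIntegral ℤ β := by
    have hgen_mul : pb.gen * β = k * n :=
      mul_left_cancel₀ hkK (by linear_combination pb.gen * hβ + hgen)
    refine isIntegral_of_cube_eq (r := -m) (s := 0) (t := k * n ^ 2) (mul_left_cancel₀ hkK ?_)
    push_cast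
    linear_combination β ^ 2 * hβ + (pb.gen * β + k * n) * hgen_mul
  have hgen_smul : pb.gen ^ 3 =
      (k ^ 2 * n : ℚ) • 1 + (k * m : ℚ) • pb.gen + (0 : ℚ) • pb.gen ^ 2 := by
    simpa [Algebra.smul_def, add_comm] using hgen
  obtain ⟨ω, hω⟩ : ∃ ω : 𝓞 K, (ω : K) = pb.gen := ⟨⟨pb.gen, hgen_int⟩, rfl⟩
  have hω_sq : ((ω ^ 2 : 𝓞 K) : K) = pb.gen ^ 2 := by rw [← hω]; rfl
  obtain ⟨θ, hθ⟩ : ∃ θ : 𝓞 K, (θ : K) = β := ⟨⟨β, hβ_int⟩, rfl⟩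
  refine ⟨ω, θ, isDeloneFaddeev_of_cube_eq ?_ hk ?_ ?_ ?_ ?_⟩
  · rw [RingOfIntegers.rank, pb.finrank, hdim]
  · exact RingOfIntegers.ext (by simpa [hω] using hgen)
  · exact RingOfIntegers.ext (by simpa [hω, hθ] using hβ)
  · rw [← Int.cast_inj (α := ℚ), Algebra.coe_trace_int, hω, trace_gen_of_cubic hdim hgen_smul,
      Int.cast_zero]
  · rw [← Int.cast_inj (α := ℚ), Algebra.coe_trace_int, hω_sq,
      trace_gen_sq_of_cubic hdim hgen_smul]
    push_cast
    ring

theorem eq_two_or_three_or_five_of_sq_dvd {p : ℕ} (hp : p.Prime) (h : (p : ℤ) ^ 2 ∣ -16200) :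
    p = 2 ∨ p = 3 ∨ p = 5 := by
  have hdvd : p ∣ 2 ^ 3 * 3 ^ 4 * 5 ^ 2 := by
    exact_mod_cast (dvd_pow_self (p : ℤ) two_ne_zero).trans (dvd_neg.1 h)
  have eq_of_dvd_pow {q e : ℕ} (hq : q.Prime) (h : p ∣ q ^ e) : p = q :=
    (Nat.prime_dvd_prime_iff_eq hp hq).1 (hp.dvd_of_dvd_pow h)
  rcases hp.dvd_mul.1 hdvd with hdvd | h5
  · rcases hp.dvd_mul.1 hdvd with h2 | h3
    · exact .inl (eq_of_dvd_pow Nat.prime_two h2)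
    · exact .inr (.inl (eq_of_dvd_pow Nat.prime_three h3))
  · exact .inr (.inr (eq_of_dvd_pow Nat.prime_five h5))

namespace IsDeloneFaddeev

variable {A : Type*} [CommRing A] [Module.Free ℤ A] {ω θ : A}

theorem isSaturatedAt_two (h : IsDeloneFaddeev ⟨-2, 0, 15, 20⟩ ω θ) :
    IsSaturatedAt 2 ![1, ω, θ] :=
  h.isSaturatedAt Int.prime_two (by norm_num) (by norm_num) (by norm_num) (by norm_num)

theorem isSaturatedAt_three (h : IsDeloneFaddeev ⟨-2, 0, 15, 20⟩ ω θ) :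
    IsSaturatedAt 3 ![1, ω, θ] :=
  .of_shear <| (h.shear 1).isSaturatedAt Int.prime_three
    (by norm_num) (by norm_num) (by norm_num) (by norm_num)

theorem isSaturatedAt_five (h : IsDeloneFaddeev ⟨-2, 0, 15, 20⟩ ω θ) :
    IsSaturatedAt 5 ![1, ω, θ] :=
  .of_swap <| h.swap.isSaturatedAt (by norm_num)
    (by norm_num) (by norm_num) (by norm_num) (by norm_num)

end IsDeloneFaddeev

/-- The number field `K = ℚ[X]/⟨X³ - 30X - 80⟩` (the polynomial is irreducible over
`ℚ`, so `K` is a number field of degree 3) has discriminant `-16200`. -/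
theorem K_discr [Fact (Irreducible (X ^ 3 - C (30 : ℚ) * X - C 80))] :
    NumberField.discr (AdjoinRoot (X ^ 3 - C (30 : ℚ) * X - C 80)) = -16200 := by
  set f : ℚ[X] := X ^ 3 - C 30 * X - C 80 with hf
  have hf_ne : f ≠ 0 := (Fact.out : Irreducible f).ne_zero
  have hdim : (AdjoinRoot.powerBasis hf_ne).dim = 3 := by
    rw [AdjoinRoot.powerBasis_dim, hf]
    compute_degree!
  have hroot : AdjoinRoot.root f ^ 3 =
      (2 : ℤ) * (15 : ℤ) * AdjoinRoot.root f + (2 : ℤ) ^ 2 * (20 : ℤ) := by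
    have : AdjoinRoot.root f ^ 3 - 30 * AdjoinRoot.root f - 80 = 0 := by
      simpa [hf] using AdjoinRoot.mk_self (f := f)
    linear_combination this
  obtain ⟨ω, θ, h⟩ := exists_isDeloneFaddeev_of_powerBasis hdim two_ne_zero hroot
  have hdiscr : Cubic.discr ⟨-2, 0, 15, 20⟩ = (-16200 : ℤ) := by norm_num [Cubic.discr]
  rw [h.numberField_discr_eq, hdiscr]
  intro p hp hsq
  rw [hdiscr] at hsq
  rcases eq_two_or_three_or_five_of_sq_dvd hp hsq with rfl | rfl | rfl
  · exact h.isSaturatedAt_two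
  · exact h.isSaturatedAt_three
  · exact h.isSaturatedAt_five
end
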